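/- Granted the graded Jacobi identity for the antibracket, the second-order terms of Δ_F² vanish if and only if the Leibniz rule Δ_F(f,g) = (Δ_F f, g) - (-1)^{ε_f}(f, Δ_F g) holds for all functions f,g. -/

import Mathlib

/-!
The proof expands the double graded commutator of `Δ²` with left multiplications.

A first-order operator without constant term is a vector field `∑ X^b ∂_b`, determined by its
values on the coordinates, and the graded commutator of two vector fields is again one. The
Hamiltonian operator `(f, ·)` is a vector field, and the odd Laplacian `Δ` satisfies
`Δ(f h) = (Δ f) h + (-1)^{ε_f} f (Δ h) + (-1)^{ε_f} (f, h)` (`lap_mul`). Comparing `Δ(f g)` with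
`Δ(g f)` yields the graded skewsymmetry of the bracket, so the Jacobi identity can be put in the
form `(f, (g, ·)) - (-1)^{(ε_f+1)(ε_g+1)} (g, (f, ·)) = ((f, g), ·)`. Both sides are vector
fields, so this holds on the whole algebra, even if `A` is not spanned by its homogeneous elements
(`jacobi_op`).

Using `lap_mul` twice, together with the operator form of the Jacobi identity, all derivatives of
`h` cancel in `[[Δ², f], g] h`, and what remains is
`(-1)^{ε_f} (Δ(f, g) - (Δ f, g) + (-1)^{ε_f} (f, Δ g)) h` (`double_comm`). This vanishes for
every `h` iff it vanishes for `h = 1`, that is, iff the Leibniz rule holds for `f` and `g`.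
-/

open scoped BigOperators

noncomputable section

/-- The sign `(-1)^p` for a parity `p : ZMod 2`, valued in `ℚ`. -/
def sgn (p : ZMod 2) : ℚ := if p = 0 then 1 else -1

/-- A supercommutative algebra of "functions on a superdomain" with local coordinates
`coord i`, Grassmann parities `ε i`, and left partial derivatives `D i`. -/
structure SuperAlg (ι : Type) [Fintype ι] [DecidableEq ι]
    (A : Type) [Ring A] [Algebra ℚ A] where
  ε : ι → ZMod 2
  hom : ZMod 2 → Submodule ℚ A
  one_mem : (1 : A) ∈ hom 0
  mul_mem : ∀ {p q : ZMod 2} {a b : A}, a ∈ hom p → b ∈ hom q → a * b ∈ hom (p + q)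
  supercomm : ∀ {p q : ZMod 2} {a b : A}, a ∈ hom p → b ∈ hom q →
    a * b = sgn (p * q) • (b * a)
  D : ι → A →ₗ[ℚ] A
  D_mem : ∀ (i : ι) {p : ZMod 2} {a : A}, a ∈ hom p → D i a ∈ hom (p + ε i)
  D_leibniz : ∀ (i : ι) {p : ZMod 2} {a : A} (b : A), a ∈ hom p →
    D i (a * b) = D i a * b + sgn (ε i * p) • (a * D i b)
  D_comm : ∀ (i j : ι) (a : A), D i (D j a) = sgn (ε i * ε j) • D j (D i a)
  coord : ι → A
  coord_mem : ∀ i, coord i ∈ hom (ε i)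
  D_coord : ∀ i j, D i (coord j) = if i = j then (1 : A) else 0

namespace SuperAlg

variable {ι : Type} [Fintype ι] [DecidableEq ι]
variable {A : Type} [Ring A] [Algebra ℚ A]

/-- The operator of left multiplication by `f`. -/
def L (f : A) : A →ₗ[ℚ] A := LinearMap.mulLeft ℚ f

/-- The graded commutator `[T,U] = T∘U - (-1)^{pq} U∘T` of operators of parities `p`, `q`. -/
def gcomm (p q : ZMod 2) (T U : A →ₗ[ℚ] A) : A →ₗ[ℚ] A :=
  T ∘ₗ U - sgn (p * q) • (U ∘ₗ T)

variable (S : SuperAlg ι A)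

/-- The bracket `(f,g) = (f ∂⃖_A) M^{AB} (∂_B g)` built from the matrix `M`,
for `f` homogeneous of parity `pf`; the right derivative is expressed through
the left one via `f ∂⃖_A = (-1)^{ε_A (ε_f + 1)} ∂_A f`. -/
def brkt (M : ι → ι → A) (pf : ZMod 2) (f g : A) : A :=
  ∑ a, ∑ b, sgn (S.ε a * (pf + 1)) • (S.D a f * (M a b * S.D b g))

/-- The first-order operator `(x, ·)` (for Grassmann-odd `x`), built from the matrix `M`. -/
def Hop (M : ι → ι → A) (x : A) : A →ₗ[ℚ] A :=
  ∑ a, ∑ b, L (S.D a x) ∘ₗ L (M a b) ∘ₗ S.D b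

/-- The Laplacian `((-1)^{ε_A}/2)(∂_A + F_A) M^{AB} ∂_B`. -/
def lap (F : ι → A) (M : ι → ι → A) : A →ₗ[ℚ] A :=
  (1/2 : ℚ) • ∑ a, ∑ b, sgn (S.ε a) •
    ((S.D a ∘ₗ L (M a b) ∘ₗ S.D b) + (L (F a) ∘ₗ L (M a b) ∘ₗ S.D b))

/-- The curvature `R_{AB} = (∂_A F_B) - (-1)^{ε_A ε_B}(∂_B F_A)` of a line bundle
connection `F`. -/
def curv (F : ι → A) (a b : ι) : A :=
  S.D a (F b) - sgn (S.ε a * S.ε b) • S.D b (F a)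

/-- The raised-index curvature `R^{AD} = E^{AB} R_{BC} E^{CD} (-1)^{ε_C}`. -/
def curvUp (E : ι → ι → A) (F : ι → A) (a d : ι) : A :=
  ∑ b, ∑ c, sgn (S.ε c) • (E a b * (S.curv F b c * E c d))

/-- The graded Jacobi identity for the antibracket, on homogeneous functions. -/
def JacobiId (E : ι → ι → A) : Prop :=
  ∀ (pf pg ph : ZMod 2) (f g h : A),
    f ∈ S.hom pf → g ∈ S.hom pg → h ∈ S.hom ph →
      sgn ((pf + 1) * (ph + 1)) • S.brkt E pf f (S.brkt E pg g h)
      + sgn ((pg + 1) * (pf + 1)) • S.brkt E pg g (S.brkt E ph h f)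
      + sgn ((ph + 1) * (pg + 1)) • S.brkt E ph h (S.brkt E pf f g) = 0

/-- The closedness relation `Σ_{cycl. A,B,C} (-1)^{ε_A ε_C} (∂_A E_{BC}) = 0`
for the two-form with components `Einv`. -/
def ClosedId (Einv : ι → ι → A) : Prop :=
  ∀ a b c : ι,
    sgn (S.ε a * S.ε c) • S.D a (Einv b c)
    + sgn (S.ε b * S.ε a) • S.D b (Einv c a)
    + sgn (S.ε c * S.ε b) • S.D c (Einv a b) = 0

/-- The Jacobi identity `Σ_{cycl. A,B,C} (-1)^{(ε_A+1)(ε_C+1)} E^{AD} (∂_D E^{BC}) = 0`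
in terms of the matrix `E^{AB}`. -/
def EJacobiId (E : ι → ι → A) : Prop :=
  ∀ a b c : ι,
    ∑ d, (sgn ((S.ε a + 1) * (S.ε c + 1)) • (E a d * S.D d (E b c))
      + sgn ((S.ε b + 1) * (S.ε a + 1)) • (E b d * S.D d (E c a))
      + sgn ((S.ε c + 1) * (S.ε b + 1)) • (E c d * S.D d (E a b))) = 0

/-- `E` is a non-degenerate graded-skewsymmetric (2,0)-tensor with inverse `Einv`. -/
structure AntiSymp (E Einv : ι → ι → A) : Prop where
  E_mem : ∀ a b, E a b ∈ S.hom (S.ε a + S.ε b + 1)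
  E_skew : ∀ a b, E a b = - sgn ((S.ε a + 1) * (S.ε b + 1)) • E b a
  Einv_mem : ∀ a b, Einv a b ∈ S.hom (S.ε a + S.ε b + 1)
  Einv_skew : ∀ a b, Einv a b = - sgn (S.ε a * S.ε b) • Einv b a
  mul_inv : ∀ a c, ∑ b, E a b * Einv b c = if a = c then (1 : A) else 0
  inv_mul : ∀ a c, ∑ b, Einv a b * E b c = if a = c then (1 : A) else 0

/-- An operator `T` of parity `pT` is of at most first order iff all its double graded
commutators with left multiplication operators vanish. -/
def IsFirstOrder (pT : ZMod 2) (T : A →ₗ[ℚ] A) : Prop :=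
  ∀ (pf pg : ZMod 2) (f g : A), f ∈ S.hom pf → g ∈ S.hom pg →
    gcomm (pT + pf) pg (gcomm pT pf T (L f)) (L g) = 0

/-- The third-order terms of an operator `T` of parity `pT` vanish iff all its triple
graded commutators with left multiplication operators vanish. -/
def ThirdOrderVanish (pT : ZMod 2) (T : A →ₗ[ℚ] A) : Prop :=
  ∀ (pf pg ph : ZMod 2) (f g h : A),
    f ∈ S.hom pf → g ∈ S.hom pg → h ∈ S.hom ph →
      gcomm (pT + pf + pg) ph
        (gcomm (pT + pf) pg (gcomm pT pf T (L f)) (L g)) (L h) = 0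

/-- `ν_F^{(0)} = ((-1)^{ε_A}/4)(∂_A + F_A/2)(E^{AB} F_B)`. -/
def nuF0 (E : ι → ι → A) (F : ι → A) : A :=
  (1/4 : ℚ) • ∑ a, ∑ b, sgn (S.ε a) •
    (S.D a (E a b * F b) + (1/2 : ℚ) • (F a * (E a b * F b)))

/-- `ν^{(1)} = (-1)^{ε_A} (∂_B ∂_A E^{AB})`. -/
def nu1 (E : ι → ι → A) : A :=
  ∑ a, ∑ b, sgn (S.ε a) • S.D b (S.D a (E a b))

/-- `ν^{(2)} = (-1)^{ε_A ε_C} (∂_D E^{AB}) E_{BC} (∂_A E^{CD})`. -/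
def nu2 (E Einv : ι → ι → A) : A :=
  ∑ a, ∑ b, ∑ c, ∑ d, sgn (S.ε a * S.ε c) •
    (S.D d (E a b) * (Einv b c * S.D a (E c d)))

/-- `ν_F = ν_F^{(0)} + ν^{(1)}/8 - ν^{(2)}/24`. -/
def nuF (E Einv : ι → ι → A) (F : ι → A) : A :=
  S.nuF0 E F + (1/8 : ℚ) • S.nu1 E - (1/24 : ℚ) • S.nu2 E Einv

/-- The divergence `div_1 X = (-1)^{ε_A} (∂_A X^A)`. -/
def div1 (X : ι → A) : A := ∑ a, sgn (S.ε a) • S.D a (X a)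

/-- A form variation (infinitesimal coordinate transformation `δΓ^A = X^A`, compared
at the same argument): an even derivation commuting with the partial derivatives. -/
structure FormVar (X : ι → A) (δv : A →ₗ[ℚ] A) : Prop where
  deriv : ∀ a b : A, δv (a * b) = δv a * b + a * δv b
  commD : ∀ (i : ι) (a : A), δv (S.D i a) = S.D i (δv a)
  X_mem : ∀ i, X i ∈ S.hom (S.ε i)

/-- The form variation of a (2,0)-tensor `E^{AB}` under `δΓ^A = X^A`:
`δE^{AB} = (X^A ∂⃖_C) E^{CB} + E^{AC}(∂_C X^B) - X^C (∂_C E^{AB})`. -/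
def VarE (X : ι → A) (δv : A →ₗ[ℚ] A) (E : ι → ι → A) : Prop :=
  ∀ a b, δv (E a b) =
    (∑ c, sgn (S.ε c * (S.ε a + 1)) • (S.D c (X a) * E c b))
    + (∑ c, E a c * S.D c (X b))
    - ∑ c, X c * S.D c (E a b)

/-- The form variation of a line bundle connection `F_A` under `δΓ^A = X^A`:
`δF_A = -(∂_A X^B) F_B - ∂_A(div_1 X) - X^C (∂_C F_A)`. -/
def VarF (X : ι → A) (δv : A →ₗ[ℚ] A) (F : ι → A) : Prop :=
  ∀ a, δv (F a) =
    - (∑ b, S.D a (X b) * F b) - S.D a (S.div1 X) - ∑ c, X c * S.D c (F a)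

/-- Khudaverdian–Voronov's odd quantity
`ν(F¹;F²,E) = ((-1)^{ε_A}/4)(∂_A + (F¹_A+F²_A)/2)(E^{AB}(F¹_B - F²_B))`. -/
def nu12 (E : ι → ι → A) (F1 F2 : ι → A) : A :=
  (1/4 : ℚ) • ∑ a, ∑ b, sgn (S.ε a) •
    (S.D a (E a b * (F1 b - F2 b))
      + (1/2 : ℚ) • ((F1 a + F2 a) * (E a b * (F1 b - F2 b))))

/-- The odd Laplacian `Δ_ρ = ((-1)^{ε_A}/(2ρ)) ∂_A ρ E^{AB} ∂_B` for a density `ρ`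
with inverse `ρinv`. -/
def lapRho (E : ι → ι → A) (ρ ρinv : A) : A →ₗ[ℚ] A :=
  (1/2 : ℚ) • ∑ a, ∑ b, sgn (S.ε a) •
    (L ρinv ∘ₗ S.D a ∘ₗ L ρ ∘ₗ L (E a b) ∘ₗ S.D b)

/-- `ν_ρ^{(0)} = (Δ_1 √ρ)/√ρ`, where `sq = √ρ` and `sqinv = 1/√ρ`. -/
def nuRho0 (E : ι → ι → A) (sq sqinv : A) : A :=
  sqinv * (S.lap (fun _ => (0 : A)) E sq)

/-- `ν_ρ = ν_ρ^{(0)} + ν^{(1)}/8 - ν^{(2)}/24`. -/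
def nuRho (E Einv : ι → ι → A) (sq sqinv : A) : A :=
  S.nuRho0 E sq sqinv + (1/8 : ℚ) • S.nu1 E - (1/24 : ℚ) • S.nu2 E Einv

/-- Khudaverdian's operator `Δ_E = Δ_1 + ν^{(1)}/8 - ν^{(2)}/24`. -/
def lapE (E Einv : ι → ι → A) : A →ₗ[ℚ] A :=
  S.lap (fun _ => (0 : A)) E + L ((1/8 : ℚ) • S.nu1 E - (1/24 : ℚ) • S.nu2 E Einv)

/-- The reordered Christoffel symbols `Γ^A{}_{BC} = (-1)^{ε_A ε_B} Γ_B{}^A{}_C`. -/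
def Gup (Gm : ι → ι → ι → A) (a b c : ι) : A := sgn (S.ε a * S.ε b) • Gm b a c

/-- The reordered Riemann curvature tensor
`R^A{}_{BCD} = (-1)^{ε_A ε_B}(∂_B Γ^A{}_{CD}) + Γ^A{}_{BE} Γ^E{}_{CD} - (-1)^{ε_B ε_C}(B ↔ C)`,
expressed through the reordered Christoffel symbols `Gu = Γ^·{}_{··}`. -/
def riemRe (Gu : ι → ι → ι → A) (a b c d : ι) : A :=
  sgn (S.ε a * S.ε b) • S.D b (Gu a c d) + (∑ e, Gu a b e * Gu e c d)
  - sgn (S.ε b * S.ε c) •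
      (sgn (S.ε a * S.ε c) • S.D c (Gu a b d) + ∑ e, Gu a c e * Gu e b d)

/-- The Ricci tensor `R_{AB} = R^C{}_{CAB}`. -/
def ricci (Gu : ι → ι → ι → A) (a b : ι) : A := ∑ c, S.riemRe Gu c c a b

/-- The odd scalar curvature `R = R_{AB} E^{BA}`. -/
def scalarR (Gu : ι → ι → ι → A) (E : ι → ι → A) : A :=
  ∑ a, ∑ b, S.ricci Gu a b * E b a

/-- The Riemann curvature tensor
`R_{AB}{}^C{}_D = (∂_A Γ_B{}^C{}_D) + (-1)^{ε_B ε_C} Γ_A{}^C{}_E Γ^E{}_{BD} - (-1)^{ε_A ε_B}(A ↔ B)`,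
built from the Christoffel symbols `Gm = Γ_·{}^·{}_·`. -/
def riem (Gm : ι → ι → ι → A) (a b c d : ι) : A :=
  S.D a (Gm b c d) + sgn (S.ε b * S.ε c) • (∑ e, Gm a c e * S.Gup Gm e b d)
  - sgn (S.ε a * S.ε b) •
      (S.D b (Gm a c d) + sgn (S.ε a * S.ε c) • ∑ e, Gm b c e * S.Gup Gm e a d)

/-- The Christoffel symbols with three lower indices,
`Γ_{ABC} = E_{AD} Γ^D{}_{BC} (-1)^{ε_B}`, built from `Gu = Γ^·{}_{··}`. -/
def Glow (Einv : ι → ι → A) (Gu : ι → ι → ι → A) (a b c : ι) : A :=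
  sgn (S.ε b) • ∑ d, Einv a d * Gu d b c

/-- `γ_{ABC} = Γ_{ABC} - (1/3)(E_{AB} ∂⃖_C + E_{AC} ∂⃖_B (-1)^{ε_B ε_C})`. -/
def gam (Einv : ι → ι → A) (Gu : ι → ι → ι → A) (a b c : ι) : A :=
  S.Glow Einv Gu a b c
  - (1/3 : ℚ) • (sgn (S.ε c * (S.ε a + S.ε b)) • S.D c (Einv a b)
      + sgn (S.ε b * S.ε c) • (sgn (S.ε b * (S.ε a + S.ε c)) • S.D b (Einv a c)))

end SuperAlg

namespace SuperAlg

/-! ### Signs -/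

theorem zmod2_cases (p : ZMod 2) : p = 0 ∨ p = 1 := by
  revert p
  decide

theorem sgn_add (p q : ZMod 2) : sgn (p + q) = sgn p * sgn q := by
  have h2 : (1 : ZMod 2) + 1 = 0 := by decide
  rcases zmod2_cases p with rfl | rfl <;> rcases zmod2_cases q with rfl | rfl <;> simp [sgn, h2]

theorem sgn_one : sgn 1 = -1 := by simp [sgn]

theorem sgn_zero : sgn 0 = 1 := by simp [sgn]

section

variable {ι : Type} [Fintype ι] [DecidableEq ι]
variable {A : Type} [Ring A] [Algebra ℚ A] (S : SuperAlg ι A)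

/-! ### Vector fields -/

/-- The vector field `∑ X^b ∂_b` as an operator on functions. -/
def VF (X : ι → A) : A →ₗ[ℚ] A := ∑ b, L (X b) ∘ₗ S.D b

theorem VF_apply (X : ι → A) (h : A) : S.VF X h = ∑ b, X b * S.D b h := by
  simp [VF, L, LinearMap.sum_apply]

theorem hom_cast {p q : ZMod 2} {a : A} (h : a ∈ S.hom p) (e : p = q) : a ∈ S.hom q := e ▸ h

theorem VF_mem {X : ι → A} {p q : ZMod 2} {g : A} (hX : ∀ b, X b ∈ S.hom (p + S.ε b))
    (hg : g ∈ S.hom q) : S.VF X g ∈ S.hom (p + q) := by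
  rw [VF_apply]
  refine Submodule.sum_mem _ fun b _ => S.hom_cast (S.mul_mem (hX b) (S.D_mem b hg)) ?_
  generalize S.ε b = e
  clear * -
  revert p q e
  decide

theorem VF_mul {X : ι → A} {p q : ZMod 2} {g : A} (hX : ∀ b, X b ∈ S.hom (p + S.ε b))
    (hg : g ∈ S.hom q) (h : A) :
    S.VF X (g * h) = S.VF X g * h + sgn (p * q) • (g * S.VF X h) := by
  simp only [VF_apply, Finset.sum_mul, Finset.mul_sum, Finset.smul_sum]
  rw [← Finset.sum_add_distrib]
  refine Finset.sum_congr rfl fun b _ => ?_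
  rw [S.D_leibniz b h hg, mul_add, mul_assoc, mul_smul_comm, ← mul_assoc (X b) g,
    S.supercomm (hX b) hg, smul_mul_assoc, smul_smul, ← sgn_add, mul_assoc]
  congr 3
  generalize S.ε b = e
  clear * -
  revert p q e
  decide

theorem VF_coord (X : ι → A) (b : ι) : S.VF X (S.coord b) = X b := by
  simp [VF_apply, S.D_coord]

/-- The second derivatives cancel in the graded commutator of two vector fields. -/
theorem VF_comm {X Y : ι → A} {p q : ZMod 2} (hX : ∀ b, X b ∈ S.hom (p + S.ε b))
    (hY : ∀ b, Y b ∈ S.hom (q + S.ε b)) (h : A) :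
    S.VF X (S.VF Y h) - sgn (p * q) • S.VF Y (S.VF X h)
      = S.VF (fun b => S.VF X (Y b) - sgn (p * q) • S.VF Y (X b)) h := by
  have e1 : S.VF X (S.VF Y h) = ∑ b, S.VF X (Y b) * S.D b h
      + ∑ b, ∑ a, sgn (p * (q + S.ε b)) • (Y b * (X a * S.D a (S.D b h))) := by
    rw [S.VF_apply Y, map_sum, ← Finset.sum_add_distrib]
    refine Finset.sum_congr rfl fun b _ => ?_
    rw [S.VF_mul hX (hY b), S.VF_apply X (S.D b h), Finset.mul_sum, Finset.smul_sum]
  have e2 : S.VF Y (S.VF X h) = ∑ b, S.VF Y (X b) * S.D b h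
      + ∑ b, ∑ a, sgn (q * (p + S.ε b)) • (X b * (Y a * S.D a (S.D b h))) := by
    rw [S.VF_apply X, map_sum, ← Finset.sum_add_distrib]
    refine Finset.sum_congr rfl fun b _ => ?_
    rw [S.VF_mul hY (hX b), S.VF_apply Y (S.D b h), Finset.mul_sum, Finset.smul_sum]
  have e3 : ∑ b, ∑ a, sgn (p * (q + S.ε b)) • (Y b * (X a * S.D a (S.D b h)))
      = sgn (p * q) • ∑ b, ∑ a, sgn (q * (p + S.ε b)) • (X b * (Y a * S.D a (S.D b h))) := by
    rw [Finset.sum_comm, Finset.smul_sum]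
    refine Finset.sum_congr rfl fun a _ => ?_
    rw [Finset.smul_sum]
    refine Finset.sum_congr rfl fun b _ => ?_
    rw [← mul_assoc, ← mul_assoc, S.supercomm (hY b) (hX a), S.D_comm a b h]
    simp only [smul_mul_assoc, mul_smul_comm, smul_smul, ← sgn_add]
    congr 2
    generalize S.ε b = e
    generalize S.ε a = e'
    clear * -
    revert p q e e'
    decide
  rw [e1, e2, e3, VF_apply]
  simp only [sub_mul, Finset.sum_sub_distrib, smul_mul_assoc, ← Finset.smul_sum, smul_add]
  abel

/-! ### The antibracket and the odd Laplacian -/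

/-- The components of the Hamiltonian vector field `(f, ·)`. -/
def ham (E : ι → ι → A) (pf : ZMod 2) (f : A) (b : ι) : A :=
  ∑ a, sgn (S.ε a * (pf + 1)) • (S.D a f * E a b)

theorem brkt_eq_VF (E : ι → ι → A) (pf : ZMod 2) (f g : A) :
    S.brkt E pf f g = S.VF (S.ham E pf f) g := by
  rw [VF_apply, brkt, Finset.sum_comm]
  refine Finset.sum_congr rfl fun b _ => ?_
  simp only [ham, Finset.sum_mul, smul_mul_assoc, mul_assoc]

variable {S} {E Einv : ι → ι → A} (hE : S.AntiSymp E Einv)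
include hE

theorem ham_mem {pf : ZMod 2} {f : A} (hf : f ∈ S.hom pf) (b : ι) :
    S.ham E pf f b ∈ S.hom (pf + 1 + S.ε b) := by
  refine Submodule.sum_mem _ fun a _ => Submodule.smul_mem _ _ ?_
  refine S.hom_cast (S.mul_mem (S.D_mem a hf) (hE.E_mem a b)) ?_
  generalize S.ε b = e
  generalize S.ε a = e'
  clear * -
  revert pf e e'
  decide

theorem brkt_mem {pf pg : ZMod 2} {f g : A} (hf : f ∈ S.hom pf) (hg : g ∈ S.hom pg) :
    S.brkt E pf f g ∈ S.hom (pf + 1 + pg) := by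
  rw [brkt_eq_VF]
  exact S.VF_mem (ham_mem hE hf) hg

theorem brkt_mul {pf pg : ZMod 2} {f g : A} (hf : f ∈ S.hom pf) (hg : g ∈ S.hom pg) (h : A) :
    S.brkt E pf f (g * h)
      = S.brkt E pf f g * h + sgn ((pf + 1) * pg) • (g * S.brkt E pf f h) := by
  simp only [brkt_eq_VF]
  exact S.VF_mul (ham_mem hE hf) hg h

omit hE in
theorem lap_apply (F : ι → A) (h : A) :
    S.lap F E h = (1 / 2 : ℚ) • ∑ a, ∑ b, sgn (S.ε a) •
      (S.D a (E a b * S.D b h) + F a * (E a b * S.D b h)) := by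
  simp [lap, L, LinearMap.sum_apply]

variable {F : ι → A} (hF : ∀ a, F a ∈ S.hom (S.ε a))
include hF

theorem lap_mem {pf : ZMod 2} {f : A} (hf : f ∈ S.hom pf) : S.lap F E f ∈ S.hom (pf + 1) := by
  rw [lap_apply]
  refine Submodule.smul_mem _ _ (Submodule.sum_mem _ fun a _ => Submodule.sum_mem _ fun b _ =>
    Submodule.smul_mem _ _ (Submodule.add_mem _ ?_ ?_))
  · refine S.hom_cast (S.D_mem a (S.mul_mem (hE.E_mem a b) (S.D_mem b hf))) ?_
    generalize S.ε b = e
    generalize S.ε a = e'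
    clear * -
    revert pf e e'
    decide
  · refine S.hom_cast (S.mul_mem (hF a) (S.mul_mem (hE.E_mem a b) (S.D_mem b hf))) ?_
    generalize S.ε b = e
    generalize S.ε a = e'
    clear * -
    revert pf e e'
    decide

/-- The antibracket measures the failure of `Δ` to be a derivation. The two cross terms in
`∂_a E^{ab} ∂_b (f h)` agree by skewsymmetry of `E`, which cancels the factor `1/2`. -/
theorem lap_mul {pf : ZMod 2} {f : A} (hf : f ∈ S.hom pf) (h : A) :
    S.lap F E (f * h) = S.lap F E f * h + sgn pf • (f * S.lap F E h)
      + sgn pf • S.brkt E pf f h := by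
  have key : ∀ a b, sgn (S.ε a) •
      (S.D a (E a b * S.D b (f * h)) + F a * (E a b * S.D b (f * h)))
      = sgn (S.ε a) • (S.D a (E a b * S.D b f) + F a * (E a b * S.D b f)) * h
        + sgn pf • (f * sgn (S.ε a) • (S.D a (E a b * S.D b h) + F a * (E a b * S.D b h)))
        + (sgn (S.ε a * (pf + 1)) • (E a b * S.D b f * S.D a h)
          + sgn pf • sgn (S.ε a * (pf + 1)) • (S.D a f * (E a b * S.D b h))) := by
    intro a b
    have hEf : E a b * S.D b f ∈ S.hom (S.ε a + S.ε b + 1 + (pf + S.ε b)) :=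
      S.mul_mem (hE.E_mem a b) (S.D_mem b hf)
    have e1 : E a b * S.D b (f * h)
        = E a b * S.D b f * h + sgn ((S.ε a + 1) * pf) • (f * (E a b * S.D b h)) := by
      rw [S.D_leibniz b h hf, mul_add, mul_assoc, mul_smul_comm, ← mul_assoc (E a b) f,
        S.supercomm (hE.E_mem a b) hf, smul_mul_assoc, smul_smul, ← sgn_add, mul_assoc]
      congr 3
      generalize S.ε b = e
      generalize S.ε a = e'
      clear * -
      revert pf e e'
      decide
    have e2 : F a * (f * (E a b * S.D b h))
        = sgn (S.ε a * pf) • (f * (F a * (E a b * S.D b h))) := by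
      rw [← mul_assoc, S.supercomm (hF a) hf, smul_mul_assoc, mul_assoc]
    rw [e1, map_add, map_smul, S.D_leibniz a h hEf, S.D_leibniz a _ hf, mul_add (F a),
      mul_smul_comm, e2]
    simp only [smul_add, mul_add, add_mul, smul_mul_assoc, mul_smul_comm, smul_smul, mul_assoc]
    generalize S.ε a = x
    generalize S.ε b = y
    rcases zmod2_cases x with rfl | rfl <;> rcases zmod2_cases y with rfl | rfl <;>
      rcases zmod2_cases pf with rfl | rfl <;>
      simp [sgn_add, add_mul, mul_add, sgn_one, sgn_zero] <;> abel
  -- The derivative of `f` is moved to the left of `E` and the summation indices are exchanged.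
  have cross : ∑ a, ∑ b, sgn (S.ε a * (pf + 1)) • (E a b * S.D b f * S.D a h)
      = sgn pf • S.brkt E pf f h := by
    rw [Finset.sum_comm, brkt, Finset.smul_sum]
    refine Finset.sum_congr rfl fun a _ => ?_
    rw [Finset.smul_sum]
    refine Finset.sum_congr rfl fun b _ => ?_
    rw [S.supercomm (hE.E_mem b a) (S.D_mem a hf), hE.E_skew b a]
    simp only [smul_mul_assoc, mul_smul_comm, smul_smul, mul_assoc]
    congr 1
    generalize S.ε a = x
    generalize S.ε b = y
    rcases zmod2_cases x with rfl | rfl <;> rcases zmod2_cases y with rfl | rfl <;>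
      rcases zmod2_cases pf with rfl | rfl <;>
      simp [sgn_add, add_mul, mul_add, sgn_one, sgn_zero]
  have cross' : ∑ a, ∑ b, sgn pf • sgn (S.ε a * (pf + 1)) • (S.D a f * (E a b * S.D b h))
      = sgn pf • S.brkt E pf f h := by
    simp only [brkt, Finset.smul_sum]
  rw [lap_apply, lap_apply F f, lap_apply F h]
  simp only [key, Finset.sum_add_distrib, cross, cross']
  simp only [← Finset.smul_sum, ← Finset.sum_mul, ← Finset.mul_sum]
  rw [← two_smul ℚ (sgn pf • S.brkt E pf f h), smul_add, smul_add, smul_mul_assoc,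
    mul_smul_comm, smul_comm (1 / 2 : ℚ) (sgn pf), smul_smul (1 / 2 : ℚ) 2]
  norm_num

/-- Graded skewsymmetry of the antibracket, from `f g = ± g f` and `lap_mul`. -/
theorem brkt_skew {pf pg : ZMod 2} {f g : A} (hf : f ∈ S.hom pf) (hg : g ∈ S.hom pg) :
    S.brkt E pf f g = - sgn ((pf + 1) * (pg + 1)) • S.brkt E pg g f := by
  have h1 := lap_mul hE hF hf g
  have h2 := lap_mul hE hF hg f
  have h3 := S.supercomm hf hg
  have h4 := S.supercomm (lap_mem hE hF hf) hg
  have h5 := S.supercomm (lap_mem hE hF hg) hf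
  rw [h3, map_smul, h2, h4, h5] at h1
  rcases zmod2_cases pf with rfl | rfl <;> rcases zmod2_cases pg with rfl | rfl <;>
    simp [sgn_add, add_mul, mul_add, sgn_one, sgn_zero] at h1 ⊢ <;> grind

/-! ### The Jacobi identity and the double commutator -/

variable (hJac : S.JacobiId E)
include hJac

/-- The Jacobi identity on homogeneous functions, in derivation form. -/
theorem jacobi_hom {pf pg ph : ZMod 2} {f g h : A} (hf : f ∈ S.hom pf) (hg : g ∈ S.hom pg)
    (hh : h ∈ S.hom ph) :
    S.brkt E pf f (S.brkt E pg g h)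
        - sgn ((pf + 1) * (pg + 1)) • S.brkt E pg g (S.brkt E pf f h)
      = S.brkt E (pf + 1 + pg) (S.brkt E pf f g) h := by
  have h1 := hJac pf pg ph f g h hf hg hh
  rw [brkt_skew hE hF hh hf, brkt_skew hE hF hh (brkt_mem hE hf hg),
    brkt_eq_VF S E pg g (_ • _), map_smul, ← brkt_eq_VF] at h1
  rcases zmod2_cases pf with rfl | rfl <;> rcases zmod2_cases pg with rfl | rfl <;>
    rcases zmod2_cases ph with rfl | rfl <;>
    simp [sgn_add, add_mul, mul_add, sgn_one, sgn_zero] at h1 ⊢ <;> grind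

/-- The Jacobi identity with an arbitrary last argument: both sides are vector fields in `h`,
hence determined by the case where `h` is a coordinate. -/
theorem jacobi_op {pf pg : ZMod 2} {f g : A} (hf : f ∈ S.hom pf) (hg : g ∈ S.hom pg) (h : A) :
    S.brkt E pf f (S.brkt E pg g h)
        - sgn ((pf + 1) * (pg + 1)) • S.brkt E pg g (S.brkt E pf f h)
      = S.brkt E (pf + 1 + pg) (S.brkt E pf f g) h := by
  have hc : ∀ h, S.brkt E pf f (S.brkt E pg g h)
        - sgn ((pf + 1) * (pg + 1)) • S.brkt E pg g (S.brkt E pf f h) = _ := fun h => by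
    simpa only [← brkt_eq_VF] using S.VF_comm (ham_mem hE hf) (ham_mem hE hg) h
  rw [hc, brkt_eq_VF, brkt_eq_VF]
  congr 2
  funext b
  have h1 := jacobi_hom hE hF hJac hf hg (S.coord_mem b)
  rw [hc, brkt_eq_VF S E _ (S.brkt E pf f g), VF_coord, VF_coord] at h1
  simpa only [← brkt_eq_VF] using h1

/-- The double graded commutator of `Δ²` is multiplication by the defect of the Leibniz
rule, up to the sign `(-1)^{ε_f}`. -/
theorem double_comm {pf pg : ZMod 2} {f g : A} (hf : f ∈ S.hom pf) (hg : g ∈ S.hom pg) (h : A) :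
    gcomm (0 + pf) pg (gcomm 0 pf (S.lap F E ∘ₗ S.lap F E) (L f)) (L g) h
      = sgn pf • ((S.lap F E (S.brkt E pf f g) - (S.brkt E (pf + 1) (S.lap F E f) g
            - sgn pf • S.brkt E pf f (S.lap F E g))) * h) := by
  -- The terms `(Δ f) (Δ x)` from the two applications of `lap_mul` cancel.
  have D2 : ∀ x, S.lap F E (S.lap F E (f * x)) = S.lap F E (S.lap F E f) * x
      + f * S.lap F E (S.lap F E x) - sgn pf • S.brkt E (pf + 1) (S.lap F E f) x
      + S.brkt E pf f (S.lap F E x) + sgn pf • S.lap F E (S.brkt E pf f x) := by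
    intro x
    rw [lap_mul hE hF hf x, map_add, map_add, map_smul, map_smul,
      lap_mul hE hF (lap_mem hE hF hf) x, lap_mul hE hF hf (S.lap F E x)]
    rcases zmod2_cases pf with rfl | rfl <;>
      simp [sgn_add, sgn_one, sgn_zero] <;> abel
  have hΔf := lap_mem hE hF hf
  have hΔΔf := lap_mem hE hF hΔf
  have hΔg := lap_mem hE hF hg
  have hfg := brkt_mem hE hf hg
  have a1 := brkt_mul hE hΔf hg h
  have a2 := brkt_mul hE hf hg h
  have a3 := brkt_mul hE hf hg (S.lap F E h)
  have a4 := brkt_mul hE hf hΔg h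
  have a5 := lap_mul hE hF hg h
  have a6 := lap_mul hE hF hg (S.brkt E pf f h)
  have a7 := lap_mul hE hF hfg h
  have a8 : S.lap F E (S.lap F E f) * (g * h)
      = sgn (pf * pg) • (g * (S.lap F E (S.lap F E f) * h)) := by
    rw [← mul_assoc, S.supercomm hΔΔf hg, smul_mul_assoc, mul_assoc]
    congr 2
    clear * -
    revert pf pg
    decide
  have a9 : f * (g * S.lap F E (S.lap F E h))
      = sgn (pf * pg) • (g * (f * S.lap F E (S.lap F E h))) := by
    rw [← mul_assoc, S.supercomm hf hg, smul_mul_assoc, mul_assoc]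
  have J := jacobi_op hE hF hJac hf hg h
  -- Linearity of `(f, ·)` is read off from its form as a vector field.
  have b1 : S.brkt E pf f (S.lap F E (g * h)) = S.brkt E pf f (S.lap F E g * h)
      + sgn pg • S.brkt E pf f (g * S.lap F E h)
      + sgn pg • S.brkt E pf f (S.brkt E pg g h) := by
    rw [a5]
    simp only [brkt_eq_VF, map_add, map_smul]
  simp only [gcomm, L, LinearMap.sub_apply, LinearMap.smul_apply, LinearMap.comp_apply,
    LinearMap.mulLeft_apply, D2, b1, a1, a2, a3, a4, a8, map_add, map_smul, a6, a7, ← J]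
  simp only [mul_add, mul_sub, sub_mul, smul_add, smul_sub, mul_smul_comm, smul_mul_assoc,
    smul_smul]
  rcases zmod2_cases pf with rfl | rfl <;> rcases zmod2_cases pg with rfl | rfl <;>
    simp [sgn_add, add_mul, mul_add, sgn_one, sgn_zero] <;> abel

end

/-- Granted the graded Jacobi identity, the second-order terms of `Δ_F²`
vanish iff the Leibniz rule `Δ_F(f,g) = (Δ_F f,g) - (-1)^{ε_f}(f,Δ_F g)` holds. -/
theorem second_order_vanish_iff_leibniz
    {ι : Type} [Fintype ι] [DecidableEq ι] {A : Type} [Ring A] [Algebra ℚ A]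
    (S : SuperAlg ι A) (E Einv : ι → ι → A) (F : ι → A)
    (hE : S.AntiSymp E Einv) (hF : ∀ a, F a ∈ S.hom (S.ε a))
    (hJac : S.JacobiId E) :
    S.IsFirstOrder 0 ((S.lap F E) ∘ₗ (S.lap F E)) ↔
      ∀ (pf pg : ZMod 2) (f g : A), f ∈ S.hom pf → g ∈ S.hom pg →
        S.lap F E (S.brkt E pf f g)
          = S.brkt E (pf + 1) (S.lap F E f) g
            - sgn pf • S.brkt E pf f (S.lap F E g) := by
  constructor
  · intro H pf pg f g hf hg
    have h1 := double_comm hE hF hJac hf hg 1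
    rw [H pf pg f g hf hg, mul_one, LinearMap.zero_apply] at h1
    have hs : sgn pf ≠ 0 := by
      rcases zmod2_cases pf with rfl | rfl <;> simp [sgn_one, sgn_zero]
    exact sub_eq_zero.mp ((smul_eq_zero.mp h1.symm).resolve_left hs)
  · intro H pf pg f g hf hg
    ext h
    rw [double_comm hE hF hJac hf hg h, H pf pg f g hf hg]
    simp

end SuperAlg
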